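/- arXiv:2006.10957 — 2 statements merged into one kernel-verified Lean document; each statement's English description precedes it below -/
import Mathlib

section
/- There exists n₀ ∈ ℕ such that for all even integers n ≥ n₀ and all even integers m with m ≥ log₂ n the following holds. Let G_0 be the point distribution on 0^m and let G_1 be the uniform distribution on {x ∈ {0,1}^m : |x| = m/2}. For y ∈ {0,1}^n let G_y := G_{y₁} × ⋯ × G_{y_n} be the product distribution on ({0,1}^m)^n. For ζ ∈ {0,1,2} let F_ζ be the uniform distribution on {y ∈ {0,1}^n : |y| = n/2 − 1 + ζ} and let D_ζ := E_{y∼F_ζ}[G_y]. Then for every conjunction C on {0,1}^{nm} of width at most (1/16)·n·log₂ n, at least one of the following holds: C(D_0) > (1/3)·C(D_1), or C(D_2) > (4/3)·C(D_1), or C(D_1) = 0. -/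
open Finset

/-- Hamming weight of `x : Fin k → Bool`. -/
def hammingWt {k : ℕ} (x : Fin k → Bool) : ℕ := #{i : Fin k | x i = true}

/-- The uniform probability mass function on a finite set `S`. -/
noncomputable def uniformOn {α : Type*} [DecidableEq α] (S : Finset α) : α → ℝ :=
  fun a => if a ∈ S then (1 : ℝ) / S.card else 0

/-- `G_z`: `G_0` is the point distribution on `0^m`, and `G_1` is the uniform distribution
on `{x ∈ {0,1}^m : |x| = m/2}` (the hard distributions for GapOr). -/
noncomputable def gapOrDist (m : ℕ) (z : Bool) : (Fin m → Bool) → ℝ :=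
  uniformOn ({x : Fin m → Bool | hammingWt x = (if z then m / 2 else 0)} : Finset _)

/-- `D_ζ = E_{y ∼ F_ζ}[G_{y₁} × ⋯ × G_{y_n}]`, where `F_ζ` is the uniform distribution
on strings `y ∈ {0,1}^n` of Hamming weight `n/2 − 1 + ζ`. -/
noncomputable def majMixDist (n m : ℕ) (ζ : ℕ) : (Fin n → Fin m → Bool) → ℝ :=
  fun X =>
    (∑ y ∈ ({y : Fin n → Bool | hammingWt y = n / 2 - 1 + ζ} : Finset _),
        ∏ i, gapOrDist m (y i) (X i)) /
      (#{y : Fin n → Bool | hammingWt y = n / 2 - 1 + ζ} : ℝ)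

/-- `C(D)`: the probability, under the distribution (mass function) `D` on
`({0,1}^m)^n ≅ {0,1}^{nm}`, that the conjunction with positive literals `P` and negative
literals `N` is satisfied. -/
noncomputable def conjProb {n m : ℕ} (P N : Finset (Fin n × Fin m))
    (D : (Fin n → Fin m → Bool) → ℝ) : ℝ :=
  ∑ X ∈ ({X : Fin n → Fin m → Bool |
      (∀ p ∈ P, X p.1 p.2 = true) ∧ (∀ p ∈ N, X p.1 p.2 = false)} : Finset _), D X

/-!
Conditioned on `y`, the blocks are independent. A block with a positive literal is satisfied with
probability `0` under `G_0`, a block without one with probability `1`. So if `A` is the set of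
blocks with a positive literal and `b i` is the probability that block `i` is satisfied under
`G_1`, then `C(D_ζ)` is `∏ i ∈ A, b i` times the average over `y` of weight `w = n/2 - 1 + ζ` of
the remaining factors, that is, times `e_{w - #A}(b i : i ∉ A) / (n choose w)`.

Write `x`, `y`, `z` for three consecutive elementary symmetric sums `e_k`, `e_{k+1}`, `e_{k+2}` of
the `b i ∈ [0, 1]`. Cauchy–Schwarz gives `(k + 1) y² ≤ x ((k + 2) z + y)`, the reverse of Newton's
inequality up to the term `x y`. If `x ≤ y / 3` this forces `z > 4 y / 3` as soon as `e_1 ≥ 4`.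

Finally `e_1` is large: the few negative literals leave at least `n / 4` of the blocks outside `A`
with at most `(log₂ n) / 4` literals each, and such a block is satisfied under `G_1` with
probability at least `4 ^ (-(log₂ n) / 4) = 1 / √n`.
-/

section ElementarySymmetric

variable {ι R : Type*}

section DecidableEq

variable [DecidableEq ι]

lemma sum_powersetCard_sum_insert {M : Type*} [AddCommMonoid M] (s : Finset ι) (k : ℕ)
    (g : Finset ι → M) :
    ∑ S ∈ powersetCard k s, ∑ j ∈ s \ S, g (insert j S) =
      (k + 1) • ∑ T ∈ powersetCard (k + 1) s, g T := by
  have count_elements : (k + 1) • ∑ T ∈ powersetCard (k + 1) s, g T =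
      ∑ T ∈ powersetCard (k + 1) s, ∑ _j ∈ T, g T := by
    rw [smul_sum]
    exact sum_congr rfl fun T hT => by rw [sum_const, (mem_powersetCard.1 hT).2]
  rw [count_elements, sum_sigma', sum_sigma']
  refine sum_nbij' (fun p => ⟨insert p.2 p.1, p.2⟩) (fun p => ⟨p.1.erase p.2, p.2⟩) ?_ ?_ ?_ ?_
    fun _ _ => rfl
  · rintro ⟨S, j⟩ h
    simp only [mem_sigma, mem_powersetCard, mem_sdiff] at h ⊢
    exact ⟨⟨insert_subset h.2.1 h.1.1, by rw [card_insert_of_notMem h.2.2, h.1.2]⟩,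
      mem_insert_self _ _⟩
  · rintro ⟨T, j⟩ h
    simp only [mem_sigma, mem_powersetCard, mem_sdiff] at h ⊢
    exact ⟨⟨(erase_subset _ _).trans h.1.1, by rw [card_erase_of_mem h.2, h.1.2]; rfl⟩,
      h.1.1 h.2, notMem_erase _ _⟩
  · rintro ⟨S, j⟩ h
    simp only [mem_sigma, mem_sdiff] at h
    simp [erase_insert h.2.2]
  · rintro ⟨T, j⟩ h
    simp only [mem_sigma] at h
    simp [insert_erase h.2]

lemma sum_powersetCard_filter_superset_prod [CommSemiring R] {s A : Finset ι} (hA : A ⊆ s)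
    (b : ι → R) (k : ℕ) :
    ∑ T ∈ powersetCard (#A + k) s with A ⊆ T, ∏ i ∈ T, b i =
      (∏ i ∈ A, b i) * ((s \ A).val.map b).esymm k := by
  rw [esymm_map_val, mul_sum]
  refine sum_nbij' (· \ A) (A ∪ ·) ?_ ?_ ?_ ?_ ?_
  · intro T hT
    simp only [mem_filter, mem_powersetCard] at hT ⊢
    exact ⟨sdiff_subset_sdiff hT.1.1 subset_rfl, by rw [card_sdiff_of_subset hT.2]; omega⟩
  · intro T hT
    simp only [mem_filter, mem_powersetCard, subset_sdiff] at hT ⊢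
    exact ⟨⟨union_subset hA hT.1.1, by rw [card_union_of_disjoint hT.1.2.symm, hT.2]⟩,
      subset_union_left⟩
  · exact fun T hT => union_sdiff_of_subset (mem_filter.1 hT).2
  · intro T hT
    exact union_sdiff_cancel_left (subset_sdiff.1 (mem_powersetCard.1 hT).1).2.symm
  · intro T hT
    rw [mul_comm, prod_sdiff (mem_filter.1 hT).2]

lemma succ_mul_esymm_succ [CommSemiring R] (s : Finset ι) (b : ι → R) (k : ℕ) :
    (k + 1 : R) * (s.val.map b).esymm (k + 1) =
      ∑ S ∈ powersetCard k s, (∏ i ∈ S, b i) * ∑ j ∈ s \ S, b j := by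
  have h := sum_powersetCard_sum_insert s k fun T => ∏ i ∈ T, b i
  rw [nsmul_eq_mul] at h
  push_cast at h
  rw [esymm_map_val, ← h]
  refine sum_congr rfl fun S _ => ?_
  rw [mul_sum]
  exact sum_congr rfl fun j hj => by rw [prod_insert (mem_sdiff.1 hj).2, mul_comm]

lemma sum_powersetCard_prod_mul_sq_sum_sdiff [CommSemiring R] (s : Finset ι) (b : ι → R) (k : ℕ) :
    ∑ S ∈ powersetCard k s, (∏ i ∈ S, b i) * (∑ j ∈ s \ S, b j) ^ 2 =
      (k + 1) * ((k + 2) * (s.val.map b).esymm (k + 2)) +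
        ∑ S ∈ powersetCard k s, (∏ i ∈ S, b i) * ∑ j ∈ s \ S, b j ^ 2 := by
  have h₁ := succ_mul_esymm_succ s b (k + 1)
  have h₂ := sum_powersetCard_sum_insert s k fun T => (∏ i ∈ T, b i) * ∑ j ∈ s \ T, b j
  rw [nsmul_eq_mul] at h₂
  push_cast at h₁ h₂
  rw [show (k + 2 : R) = k + 1 + 1 by ring, h₁, ← h₂, ← sum_add_distrib]
  refine sum_congr rfl fun S _ => ?_
  rw [sq, sum_mul, mul_sum, mul_sum, ← sum_add_distrib]
  refine sum_congr rfl fun j hj => ?_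
  rw [prod_insert (mem_sdiff.1 hj).2, sdiff_insert, ← add_sum_erase _ b hj]
  ring

end DecidableEq

lemma esymm_map_val_zero [CommSemiring R] (s : Finset ι) (b : ι → R) :
    (s.val.map b).esymm 0 = 1 := by
  simp [esymm_map_val]

lemma esymm_map_val_one [CommSemiring R] (s : Finset ι) (b : ι → R) :
    (s.val.map b).esymm 1 = ∑ i ∈ s, b i := by
  simp [esymm_map_val, powersetCard_one]

variable {s : Finset ι}

lemma esymm_map_val_nonneg [CommSemiring R] [PartialOrder R] [IsOrderedRing R] {b : ι → R}
    (hb : ∀ i ∈ s, 0 ≤ b i) (k : ℕ) : 0 ≤ (s.val.map b).esymm k := by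
  rw [esymm_map_val]
  exact sum_nonneg fun T hT => prod_nonneg fun i hi => hb i ((mem_powersetCard.1 hT).1 hi)

lemma succ_mul_sq_esymm_succ_le [CommRing R] [LinearOrder R] [IsStrictOrderedRing R] {b : ι → R}
    (hb₀ : ∀ i ∈ s, 0 ≤ b i) (hb₁ : ∀ i ∈ s, b i ≤ 1) (k : ℕ) :
    (k + 1) * (s.val.map b).esymm (k + 1) ^ 2 ≤
      (s.val.map b).esymm k *
        ((k + 2) * (s.val.map b).esymm (k + 2) + (s.val.map b).esymm (k + 1)) := by
  classical
  have hprod : ∀ S ∈ powersetCard k s, 0 ≤ ∏ i ∈ S, b i := fun S hS =>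
    prod_nonneg fun i hi => hb₀ i ((mem_powersetCard.1 hS).1 hi)
  have cauchy_schwarz : ((k + 1) * (s.val.map b).esymm (k + 1)) ^ 2 ≤ (s.val.map b).esymm k *
      ∑ S ∈ powersetCard k s, (∏ i ∈ S, b i) * (∑ j ∈ s \ S, b j) ^ 2 := by
    rw [succ_mul_esymm_succ, esymm_map_val]
    exact sum_sq_le_sum_mul_sum_of_sq_le_mul _ hprod
      (fun S hS => mul_nonneg (hprod S hS) (sq_nonneg _)) fun S _ => le_of_eq (by ring)
  have second_moment : ∑ S ∈ powersetCard k s, (∏ i ∈ S, b i) * (∑ j ∈ s \ S, b j) ^ 2 ≤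
      (k + 1) * ((k + 2) * (s.val.map b).esymm (k + 2) + (s.val.map b).esymm (k + 1)) := by
    rw [sum_powersetCard_prod_mul_sq_sum_sdiff, mul_add, succ_mul_esymm_succ]
    gcongr with S hS j hj
    · exact hprod S hS
    · have hj' := (mem_sdiff.1 hj).1
      exact pow_le_of_le_one (hb₀ j hj') (hb₁ j hj') two_ne_zero
  have hk : (0 : R) < k + 1 := by positivity
  refine le_of_mul_le_mul_left ?_ hk
  calc (k + 1) * ((k + 1) * (s.val.map b).esymm (k + 1) ^ 2)
      = ((k + 1) * (s.val.map b).esymm (k + 1)) ^ 2 := by ring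
    _ ≤ _ := cauchy_schwarz.trans
        (mul_le_mul_of_nonneg_left second_moment (esymm_map_val_nonneg hb₀ k))
    _ = _ := by ring

lemma mul_esymm_succ_lt_esymm_or [Field R] [LinearOrder R] [IsStrictOrderedRing R] {b : ι → R}
    (hb₀ : ∀ i ∈ s, 0 ≤ b i) (hb₁ : ∀ i ∈ s, b i ≤ 1) (hsum : 4 ≤ ∑ i ∈ s, b i) {k : ℕ}
    (hpos : 0 < (s.val.map b).esymm (k + 1)) :
    1 / 3 * (s.val.map b).esymm (k + 1) < (s.val.map b).esymm k ∨
      4 / 3 * (s.val.map b).esymm (k + 1) < (s.val.map b).esymm (k + 2) := by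
  by_contra! ⟨hx, hz⟩
  have key := succ_mul_sq_esymm_succ_le hb₀ hb₁ k
  have hz₀ := esymm_map_val_nonneg hb₀ (k + 2)
  obtain rfl | hk := k.eq_zero_or_pos
  · rw [zero_add, esymm_map_val_one] at hz key
    rw [esymm_map_val_zero] at key
    have hsq : (∑ i ∈ s, b i) ^ 2 ≤ 11 / 3 * ∑ i ∈ s, b i := by
      push_cast at key
      linarith
    nlinarith
  · have hk : (1 : R) ≤ k := by exact_mod_cast hk
    set y := (s.val.map b).esymm (k + 1)
    have hle : (k + 1) * y ^ 2 ≤ 1 / 3 * y * ((k + 2) * (4 / 3 * y) + y) := by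
      refine key.trans ?_
      gcongr
    have hlt : 1 / 3 * y * ((k + 2) * (4 / 3 * y) + y) < (k + 1) * y ^ 2 := by
      nlinarith [pow_pos hpos 2]
    exact hle.not_gt hlt

end ElementarySymmetric

lemma choose_add_le_succ_pow_mul_choose {c M r : ℕ} (h : (c + 1) * r ≤ c * (M + 1)) (w : ℕ) :
    (M + w).choose r ≤ (c + 1) ^ w * M.choose r := by
  induction w with
  | zero => simp
  | succ w ih =>
    have hr : r < M + w + 1 := by nlinarith
    have hratio : M + w + 1 ≤ (c + 1) * (M + w + 1 - r) := by
      zify [hr.le] at h ⊢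
      nlinarith
    have hstep : (M + w + 1).choose r ≤ (c + 1) * (M + w).choose r := by
      refine Nat.le_of_mul_le_mul_right ?_ (Nat.sub_pos_of_lt hr)
      calc (M + w + 1).choose r * (M + w + 1 - r) = (M + w).choose r * (M + w + 1) :=
            (Nat.choose_mul_succ_eq (M + w) r).symm
        _ ≤ (M + w).choose r * ((c + 1) * (M + w + 1 - r)) := Nat.mul_le_mul_left _ hratio
        _ = (c + 1) * (M + w).choose r * (M + w + 1 - r) := by ring
    calc (M + (w + 1)).choose r ≤ (c + 1) * (M + w).choose r := hstep
      _ ≤ (c + 1) * ((c + 1) ^ w * M.choose r) := Nat.mul_le_mul_left _ ih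
      _ = (c + 1) ^ (w + 1) * M.choose r := by ring

lemma four_pow_le_sqrt {w : ℕ} {x : ℝ} (hx : 0 < x) (h : (w : ℝ) ≤ Real.logb 2 x / 4) :
    (4 : ℝ) ^ w ≤ √x := by
  refine Real.le_sqrt_of_sq_le ?_
  calc ((4 : ℝ) ^ w) ^ 2 = 2 ^ (4 * w) := by
        rw [show (4 : ℝ) = 2 ^ 2 by norm_num, ← pow_mul, ← pow_mul]; congr 1; ring
    _ = (2 : ℝ) ^ ((4 * w : ℕ) : ℝ) := (Real.rpow_natCast _ _).symm
    _ ≤ x := by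
        rw [← Real.le_logb_iff_rpow_le one_lt_two hx]
        push_cast
        linarith

section Fiber

variable {ι κ : Type*} [DecidableEq ι] [DecidableEq κ] [Fintype κ]

/-- The fiber of `S` over `i`. For a set `S` of literals, indexed by pairs of a block and a
position in it, these are the literals of `S` in block `i`. -/
def fiber (S : Finset (ι × κ)) (i : ι) : Finset κ := {j | (i, j) ∈ S}

lemma mem_fiber {S : Finset (ι × κ)} {i : ι} {j : κ} : j ∈ fiber S i ↔ (i, j) ∈ S := by
  simp [fiber]

lemma fiber_eq_empty_iff {S : Finset (ι × κ)} {i : ι} :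
    fiber S i = ∅ ↔ i ∉ S.image Prod.fst := by
  simp [fiber, filter_eq_empty_iff]

lemma sum_card_fiber_le (S : Finset (ι × κ)) (s : Finset ι) : ∑ i ∈ s, #(fiber S i) ≤ #S := by
  rw [← card_sigma]
  refine card_le_card_of_injOn (fun p => (p.1, p.2)) (fun p hp => ?_) (fun p _ q _ h => ?_)
  · exact mem_fiber.1 (mem_sigma.1 hp).2
  · simpa [Sigma.ext_iff] using h

lemma card_sub_div_le_card_filter_card_fiber_le (S : Finset (ι × κ)) (s : Finset ι) {t : ℝ}
    (ht : 0 < t) : #s - #S / t ≤ #{i ∈ s | (#(fiber S i) : ℝ) ≤ t} := by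
  have hlong : (#{i ∈ s | ¬ (#(fiber S i) : ℝ) ≤ t} : ℝ) * t ≤ #S :=
    calc (#{i ∈ s | ¬ (#(fiber S i) : ℝ) ≤ t} : ℝ) * t
        ≤ ∑ i ∈ s with ¬ (#(fiber S i) : ℝ) ≤ t, (#(fiber S i) : ℝ) := by
          rw [← nsmul_eq_mul]
          exact card_nsmul_le_sum _ _ _ fun i hi => (not_le.1 (mem_filter.1 hi).2).le
      _ ≤ #S := by exact_mod_cast sum_card_fiber_le S _
  have hsplit : (#{i ∈ s | (#(fiber S i) : ℝ) ≤ t} : ℝ) +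
      #{i ∈ s | ¬ (#(fiber S i) : ℝ) ≤ t} = #s := by
    exact_mod_cast card_filter_add_card_filter_not _
  linarith [(le_div_iff₀ ht).2 hlong]

end Fiber

section HammingWeight

variable {k : ℕ} (w : ℕ)

lemma sum_hammingWt_eq_sum_powersetCard {M : Type*} [AddCommMonoid M] (f : (Fin k → Bool) → M) :
    ∑ y with hammingWt y = w, f y = ∑ T ∈ powersetCard w univ, f fun i => decide (i ∈ T) := by
  symm
  refine sum_nbij' (fun T i => decide (i ∈ T))
    (fun y => ({i | y i = true} : Finset (Fin k))) ?_ ?_ ?_ ?_ fun _ _ => rfl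
  · intro T hT
    rw [mem_filter_univ]
    simpa [hammingWt] using hT
  · intro y hy
    exact mem_powersetCard.2 ⟨subset_univ _, (mem_filter.1 hy).2⟩
  · exact fun T _ => by simp
  · exact fun y _ => by simp

lemma card_filter_hammingWt_eq : #{y : Fin k → Bool | hammingWt y = w} = k.choose w := by
  rw [card_eq_sum_ones, sum_hammingWt_eq_sum_powersetCard]
  simp

end HammingWeight

section Block

variable {m : ℕ} (p q : Finset (Fin m)) (z : Bool)

/-- The probability that a block drawn from `G_z` satisfies the conjunction with positive literals
`p` and negative literals `q`. -/
noncomputable def blockProb : ℝ :=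
  ∑ x : Fin m → Bool with (∀ j ∈ p, x j = true) ∧ ∀ j ∈ q, x j = false, gapOrDist m z x

lemma blockProb_eq_card_div_choose :
    blockProb p q z =
      #{T ∈ powersetCard (if z then m / 2 else 0) univ | p ⊆ T ∧ Disjoint q T} /
        m.choose (if z then m / 2 else 0) := by
  simp only [blockProb, gapOrDist, uniformOn, card_filter_hammingWt_eq, mem_filter_univ]
  rw [← sum_filter, filter_comm, sum_filter, sum_hammingWt_eq_sum_powersetCard, ← sum_filter,
    sum_const, nsmul_eq_mul, mul_one_div]
  simp [subset_iff, disjoint_left]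

lemma blockProb_nonneg : 0 ≤ blockProb p q z := by
  rw [blockProb_eq_card_div_choose]
  positivity

lemma blockProb_le_one : blockProb p q z ≤ 1 := by
  rw [blockProb_eq_card_div_choose]
  refine div_le_one_of_le₀ ?_ (Nat.cast_nonneg _)
  exact_mod_cast (card_filter_le _ _).trans_eq (by simp)

lemma blockProb_false : blockProb p q false = if p = ∅ then 1 else 0 := by
  rw [blockProb_eq_card_div_choose]
  simp [filter_singleton, apply_ite]

lemma blockProb_empty_true :
    blockProb ∅ q true = (m - #q).choose (m / 2) / m.choose (m / 2) := by
  have havoid : {T ∈ powersetCard (m / 2) (univ : Finset (Fin m)) | Disjoint q T} =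
      powersetCard (m / 2) qᶜ := by
    ext T
    simp [mem_powersetCard, subset_compl_iff_disjoint_left, and_comm]
  simp [blockProb_eq_card_div_choose, havoid, card_compl]

lemma inv_four_pow_card_le_blockProb (hq : 4 * #q ≤ m) :
    ((4 : ℝ) ^ #q)⁻¹ ≤ blockProb ∅ q true := by
  have hchoose : m.choose (m / 2) ≤ 4 ^ #q * (m - #q).choose (m / 2) := by
    have h := choose_add_le_succ_pow_mul_choose (c := 3) (M := m - #q) (r := m / 2)
      (by omega) #q
    rwa [Nat.sub_add_cancel (by omega)] at h
  have hpos : (0 : ℝ) < m.choose (m / 2) := by exact_mod_cast Nat.choose_pos (Nat.div_le_self m 2)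
  rw [blockProb_empty_true, le_div_iff₀ hpos, inv_mul_le_iff₀ (by positivity)]
  exact_mod_cast hchoose

end Block

section Conjunction

variable {n m : ℕ} (P N : Finset (Fin n × Fin m))

/-- The probability that a block drawn from `G_1` satisfies the literals of the conjunction in
block `i`. -/
noncomputable def satProb (i : Fin n) : ℝ := blockProb (fiber P i) (fiber N i) true

lemma satProb_nonneg (i : Fin n) : 0 ≤ satProb P N i := blockProb_nonneg _ _ _

lemma satProb_le_one (i : Fin n) : satProb P N i ≤ 1 := blockProb_le_one _ _ _

lemma conjProb_majMixDist_eq_sum (ζ : ℕ) :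
    conjProb P N (majMixDist n m ζ) =
      (∑ T ∈ powersetCard (n / 2 - 1 + ζ) univ,
        ∏ i, blockProb (fiber P i) (fiber N i) (decide (i ∈ T))) / n.choose (n / 2 - 1 + ζ) := by
  have hpi : ({X | (∀ p ∈ P, X p.1 p.2 = true) ∧ ∀ p ∈ N, X p.1 p.2 = false} :
      Finset (Fin n → Fin m → Bool)) = Fintype.piFinset fun i =>
        {x | (∀ j ∈ fiber P i, x j = true) ∧ ∀ j ∈ fiber N i, x j = false} := by
    ext X
    simp [mem_fiber, forall_and]
  unfold conjProb majMixDist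
  rw [← sum_div, card_filter_hammingWt_eq, sum_comm, sum_hammingWt_eq_sum_powersetCard, hpi]
  simp only [blockProb, prod_univ_sum]

lemma prod_blockProb_eq_ite (T : Finset (Fin n)) :
    ∏ i, blockProb (fiber P i) (fiber N i) (decide (i ∈ T)) =
      if P.image Prod.fst ⊆ T then ∏ i ∈ T, satProb P N i else 0 := by
  split_ifs with hT
  · rw [← prod_subset (subset_univ T)]
    · exact prod_congr rfl fun i hi => by rw [decide_eq_true hi, satProb]
    · intro i _ hi
      rw [decide_eq_false hi, blockProb_false, if_pos (fiber_eq_empty_iff.2 fun h => hi (hT h))]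
  · obtain ⟨i, hi, hiT⟩ := not_subset.1 hT
    refine prod_eq_zero (mem_univ i) ?_
    rw [decide_eq_false hiT, blockProb_false, if_neg (mt fiber_eq_empty_iff.1 (not_not.2 hi))]

lemma conjProb_majMixDist_eq_zero {ζ : ℕ} (h : n / 2 - 1 + ζ < #(P.image Prod.fst)) :
    conjProb P N (majMixDist n m ζ) = 0 := by
  rw [conjProb_majMixDist_eq_sum, sum_eq_zero, zero_div]
  intro T hT
  rw [prod_blockProb_eq_ite, if_neg]
  exact fun hsub => (card_le_card hsub).not_gt ((mem_powersetCard.1 hT).2.trans_lt h)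

lemma conjProb_majMixDist_eq_esymm {ζ k : ℕ} (h : n / 2 - 1 + ζ = #(P.image Prod.fst) + k) :
    conjProb P N (majMixDist n m ζ) =
      (∏ i ∈ P.image Prod.fst, satProb P N i) *
        ((P.image Prod.fst)ᶜ.val.map (satProb P N)).esymm k /
          n.choose (n / 2 - 1 + ζ) := by
  simp only [conjProb_majMixDist_eq_sum, prod_blockProb_eq_ite]
  rw [← sum_filter, h, sum_powersetCard_filter_superset_prod (subset_univ _), compl_eq_univ_sdiff]

variable {P N}

lemma mul_conjProb_majMixDist_one_lt {a : ℝ} {ζ k l : ℕ} (hn : 2 ≤ n) (hζ : ζ ≤ 2)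
    (hk : n / 2 - 1 + 1 = #(P.image Prod.fst) + k) (hl : n / 2 - 1 + ζ = #(P.image Prod.fst) + l)
    (hpos : 0 < ∏ i ∈ P.image Prod.fst, satProb P N i)
    (hlt : a * ((P.image Prod.fst)ᶜ.val.map (satProb P N)).esymm k <
      ((P.image Prod.fst)ᶜ.val.map (satProb P N)).esymm l) :
    a * conjProb P N (majMixDist n m 1) < conjProb P N (majMixDist n m ζ) := by
  have hnonneg := esymm_map_val_nonneg (s := (P.image Prod.fst)ᶜ)
    (fun i _ => satProb_nonneg P N i) l
  have hchoose : (n.choose (n / 2 - 1 + ζ) : ℝ) ≤ n.choose (n / 2 - 1 + 1) := by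
    rw [Nat.sub_add_cancel (by omega)]
    exact_mod_cast Nat.choose_le_middle _ _
  have hchoose_pos : (0 : ℝ) < n.choose (n / 2 - 1 + ζ) := by
    exact_mod_cast Nat.choose_pos (by omega)
  rw [conjProb_majMixDist_eq_esymm P N hk, conjProb_majMixDist_eq_esymm P N hl, ← mul_div_assoc,
    mul_left_comm]
  exact (div_lt_div_of_pos_right (mul_lt_mul_of_pos_left hlt hpos)
    (hchoose_pos.trans_le hchoose)).trans_le
      (div_le_div_of_nonneg_left (mul_nonneg hpos.le hnonneg) hchoose_pos hchoose)

lemma sqrt_div_four_le_sum_satProb (hn : 1 < n) (hm : Real.logb 2 n ≤ m)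
    (hN : (#N : ℝ) ≤ 1 / 16 * n * Real.logb 2 n) {s : Finset (Fin n)}
    (hs : Disjoint s (P.image Prod.fst)) (hcard : (n : ℝ) / 2 ≤ #s) :
    √n / 4 ≤ ∑ i ∈ s, satProb P N i := by
  have hn : (1 : ℝ) < n := by exact_mod_cast hn
  have hlog : 0 < Real.logb 2 n := Real.logb_pos one_lt_two hn
  set short : Finset (Fin n) := {i ∈ s | (#(fiber N i) : ℝ) ≤ Real.logb 2 n / 4}
  have hshort_card : (n : ℝ) / 4 ≤ #short := by
    have hlong : #N / (Real.logb 2 n / 4) ≤ (n : ℝ) / 4 := by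
      rw [div_le_iff₀ (by positivity)]
      linarith
    linarith [card_sub_div_le_card_filter_card_fiber_le N s
      (t := Real.logb 2 n / 4) (by positivity)]
  have hshort_prob : ∀ i ∈ short, (√n)⁻¹ ≤ satProb P N i := by
    intro i hi
    obtain ⟨his, hshort⟩ := mem_filter.1 hi
    have hwidth : 4 * #(fiber N i) ≤ m := by
      have : 4 * (#(fiber N i) : ℝ) ≤ m := by linarith
      exact_mod_cast this
    rw [satProb, fiber_eq_empty_iff.2 (disjoint_left.1 hs his)]
    refine le_trans ?_ (inv_four_pow_card_le_blockProb _ hwidth)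
    gcongr
    exact four_pow_le_sqrt (by linarith) hshort
  calc √n / 4 = n / 4 * (√n)⁻¹ := by
        rw [div_mul_eq_mul_div, ← div_eq_mul_inv, Real.div_sqrt]
    _ ≤ #short * (√n)⁻¹ := by gcongr
    _ ≤ ∑ i ∈ short, satProb P N i := by
        rw [← nsmul_eq_mul]
        exact card_nsmul_le_sum _ _ _ hshort_prob
    _ ≤ ∑ i ∈ s, satProb P N i :=
        sum_le_sum_of_subset_of_nonneg (filter_subset _ _) fun _ _ _ => satProb_nonneg _ _ _

lemma four_le_sum_satProb (hn : 256 ≤ n) (hm : Real.logb 2 n ≤ m)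
    (hN : (#N : ℝ) ≤ 1 / 16 * n * Real.logb 2 n) (hP : #(P.image Prod.fst) ≤ n / 2) :
    4 ≤ ∑ i ∈ (P.image Prod.fst)ᶜ, satProb P N i := by
  have hcard : n ≤ 2 * #(P.image Prod.fst)ᶜ := by rw [card_compl, Fintype.card_fin]; omega
  have hcard : (n : ℝ) ≤ 2 * #(P.image Prod.fst)ᶜ := by exact_mod_cast hcard
  have hsqrt : 16 ≤ √(n : ℝ) := Real.le_sqrt_of_sq_le (by norm_num; exact_mod_cast hn)
  have := sqrt_div_four_le_sum_satProb (by omega) hm hN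
    (disjoint_compl_left (a := P.image Prod.fst)) (by linarith)
  linarith

end Conjunction

theorem stmt_1_general {n m : ℕ} (hn : 256 ≤ n) (hm : Real.logb 2 n ≤ m)
    {P N : Finset (Fin n × Fin m)} (hN : (#N : ℝ) ≤ 1 / 16 * n * Real.logb 2 n) :
    1 / 3 * conjProb P N (majMixDist n m 1) < conjProb P N (majMixDist n m 0) ∨
      4 / 3 * conjProb P N (majMixDist n m 1) < conjProb P N (majMixDist n m 2) ∨
      conjProb P N (majMixDist n m 1) = 0 := by
  obtain hlarge | hsmall := lt_or_ge (n / 2 - 1 + 1) #(P.image Prod.fst)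
  · exact .inr (.inr (conjProb_majMixDist_eq_zero P N hlarge))
  obtain ⟨k, hk⟩ := Nat.exists_eq_add_of_le hsmall
  obtain hzero | hne := eq_or_ne ((∏ i ∈ P.image Prod.fst, satProb P N i) *
    ((P.image Prod.fst)ᶜ.val.map (satProb P N)).esymm k) 0
  · exact .inr (.inr (by rw [conjProb_majMixDist_eq_esymm P N hk, hzero, zero_div]))
  have hc : 0 < ∏ i ∈ P.image Prod.fst, satProb P N i :=
    (prod_nonneg fun i _ => satProb_nonneg P N i).lt_of_ne' (left_ne_zero_of_mul hne)
  have he : 0 < ((P.image Prod.fst)ᶜ.val.map (satProb P N)).esymm k :=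
    (esymm_map_val_nonneg (fun i _ => satProb_nonneg P N i) k).lt_of_ne' (right_ne_zero_of_mul hne)
  have hsum := four_le_sum_satProb (P := P) hn hm hN (by omega)
  cases k with
  | zero =>
    refine .inr (.inl (mul_conjProb_majMixDist_one_lt (ζ := 2) (l := 1) (by omega) le_rfl hk
      (by omega) hc ?_))
    rw [esymm_map_val_zero, esymm_map_val_one]
    linarith
  | succ k =>
    refine (mul_esymm_succ_lt_esymm_or (fun i _ => satProb_nonneg P N i)
      (fun i _ => satProb_le_one P N i) hsum he).imp (fun hlt => ?_) fun hlt => .inl ?_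
    · exact mul_conjProb_majMixDist_one_lt (by omega) zero_le_two hk (by omega) hc hlt
    · exact mul_conjProb_majMixDist_one_lt (by omega) le_rfl hk (by omega) hc hlt

/-- core of Theorem 1.3, `MAJ ∘ GapOr`. There is `n₀` such that for all
even `n ≥ n₀` and all even `m ≥ log₂ n`: for every conjunction `C` on `{0,1}^{nm}` of width
at most `(1/16)·n·log₂ n`, either `C(D₀) > (1/3)·C(D₁)`, or `C(D₂) > (4/3)·C(D₁)`, or
`C(D₁) = 0`. -/
theorem stmt_1 :
    ∃ n₀ : ℕ, ∀ n m : ℕ, n₀ ≤ n → 2 ∣ n → 2 ∣ m → Real.logb 2 n ≤ (m : ℝ) →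
      ∀ P N : Finset (Fin n × Fin m), Disjoint P N →
      ((P.card : ℝ) + (N.card : ℝ) ≤ (1 / 16) * n * Real.logb 2 n) →
      (1 / 3) * conjProb P N (majMixDist n m 1) < conjProb P N (majMixDist n m 0) ∨
        (4 / 3) * conjProb P N (majMixDist n m 1) < conjProb P N (majMixDist n m 2) ∨
        conjProb P N (majMixDist n m 1) = 0 := by
  refine ⟨256, fun n m hn _ _ hm P N _ hw => stmt_1_general hn hm (le_trans ?_ hw)⟩
  exact le_add_of_nonneg_left (Nat.cast_nonneg _)
end

section
/- Let m be a positive even integer and let w be a natural number with w ≤ m/4. Then 3^w · binom(m − w, m/2) ≥ binom(m, m/2), where binom denotes the binomial coefficient. Equivalently, if G_1 is the uniform distribution on {x ∈ {0,1}^m : |x| = m/2} and C is a conjunction consisting only of w ≤ m/4 negative literals, then C(G_1) ≥ 3^{−w}. -/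
/-!
The ratio `(n + 1).choose k / n.choose k = (n + 1) / (n + 1 - k)` decreases as `n` grows, so along
the ascent from `m - w` to `m` it is largest at `n = m - w`, where `k ≤ m / 2` and `w ≤ m / 4` make
it at most `3`.
-/

theorem choose_succ_le_mul_choose {n k c : ℕ} (h : n + 1 ≤ c * (n + 1 - k)) :
    (n + 1).choose k ≤ c * n.choose k := by
  have hpos : 0 < n + 1 - k := Nat.pos_of_mul_pos_left (n.succ_pos.trans_le h)
  refine Nat.le_of_mul_le_mul_right ?_ hpos
  calc (n + 1).choose k * (n + 1 - k)
      = n.choose k * (n + 1) := (Nat.choose_mul_succ_eq n k).symm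
    _ ≤ n.choose k * (c * (n + 1 - k)) := by gcongr
    _ = c * n.choose k * (n + 1 - k) := by ring

theorem succ_le_mul_succ_sub_of_le {a b k c : ℕ} (hab : a ≤ b) (h : a + 1 ≤ c * (a + 1 - k)) :
    b + 1 ≤ c * (b + 1 - k) := by
  obtain ⟨d, rfl⟩ := Nat.exists_eq_add_of_le hab
  have hpos : 0 < c * (a + 1 - k) := a.succ_pos.trans_le h
  have hc : 1 ≤ c := Nat.pos_of_mul_pos_right hpos
  have hk : 0 < a + 1 - k := Nat.pos_of_mul_pos_left hpos
  calc a + d + 1 = a + 1 + 1 * d := by ring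
    _ ≤ c * (a + 1 - k) + c * d := by gcongr
    _ = c * (a + d + 1 - k) := by rw [← mul_add]; congr 1; omega

theorem choose_add_le_pow_mul_choose {n k c : ℕ} (h : n + 1 ≤ c * (n + 1 - k)) (w : ℕ) :
    (n + w).choose k ≤ c ^ w * n.choose k := by
  induction w with
  | zero => simp
  | succ w ih =>
    calc (n + w + 1).choose k
        ≤ c * (n + w).choose k :=
          choose_succ_le_mul_choose (succ_le_mul_succ_sub_of_le (n.le_add_right w) h)
      _ ≤ c * (c ^ w * n.choose k) := by gcongr
      _ = c ^ (w + 1) * n.choose k := by ring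

theorem stmt_6_general {m w k : ℕ} (hk : 2 * k ≤ m) (hw : 4 * w ≤ m) :
    m.choose k ≤ 3 ^ w * (m - w).choose k := by
  have ratio_le : m - w + 1 ≤ 3 * (m - w + 1 - k) := by omega
  have hwm : w ≤ m := by omega
  simpa only [Nat.sub_add_cancel hwm] using choose_add_le_pow_mul_choose ratio_le w

/-- If `m > 0` is even and `w ≤ m/4`, then
`3^w · binom(m−w, m/2) ≥ binom(m, m/2)`. -/
theorem stmt_6 (m w : ℕ) (hm : 0 < m) (h2 : 2 ∣ m) (hw : 4 * w ≤ m) :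
    m.choose (m / 2) ≤ 3 ^ w * (m - w).choose (m / 2) :=
  stmt_6_general (Nat.mul_div_le m 2) hw
end
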